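/- For β ∈ (0,1), positive integers n and k with k ≤ n and n - kβ > 0, and t > 0 with f_β(t) > 0, define G^{(n,k)}_β(t) = (β^k t^{-n} / (Γ(n - kβ) f_β(t))) ∫_0^t f_β(v)(t-v)^{n-kβ-1} dv. Then ∑_{k=1}^{n} G^{(n,k)}_β(t) · β^{1-k} Γ(n)/Γ(k) · (β^{k-1}Γ(k)/Γ(n)) S_β(n,k) = 1; equivalently, ∑_{k=1}^{n} β^k t^{-n} S_β(n,k) ∫_0^t f_β(v)(t-v)^{n-kβ-1}/Γ(n-kβ) dv = f_β(t) for almost every t > 0, where S_β(n,k) is the generalized Stirling number. -/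

import Mathlib

open MeasureTheory Finset

/-- Rising factorial (Pochhammer symbol). -/
noncomputable def risingFactorial (x : ℝ) (n : ℕ) : ℝ :=
  ∏ i ∈ Finset.range n, (x + i)

/-- Generalized Stirling number of the second kind. -/
noncomputable def genStirling (σ : ℝ) (n k : ℕ) : ℝ :=
  (1 / (σ ^ k * (Nat.factorial k : ℝ))) *
    ∑ j ∈ Finset.Icc 1 k, (-1 : ℝ) ^ j * (Nat.choose k j : ℝ) *
      risingFactorial (-(j * σ)) n

/-- A density of a positive `σ`-stable random variable. -/
def IsStableDensity (σ : ℝ) (f : ℝ → ℝ) : Prop :=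
  (∀ t, 0 ≤ f t) ∧ (∀ t ≤ (0 : ℝ), f t = 0) ∧
    ∀ l : ℝ, 0 ≤ l →
      ∫ t in Set.Ioi (0 : ℝ), Real.exp (-l * t) * f t = Real.exp (-(l ^ σ))

/-!
Differentiating `e^{-l^β}` shows that the Laplace transform of `t^n f(t)` at `l` is
`e^{-l^β} ∑_k β^k S_β(n, k) l^{-(n - kβ)}`: the coefficients `β^k S_β(n, k)` obey the recurrence
that one more derivative produces. Each summand is the Laplace transform of the convolution of `f`
with `u^{n - kβ - 1} / Γ(n - kβ)`, so the identity follows from uniqueness of the Laplace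
transform. Uniqueness itself is obtained by tilting with an exponential, so that the transform
becomes a moment generating function finite near `0`, which extends analytically to a strip
containing the imaginary axis and thereby determines the characteristic function. As the
coefficients are nonnegative, everything takes place among `ℝ≥0∞`-valued functions.
-/

open ProbabilityTheory Filter
open scoped ENNReal Topology

lemma cast_succ_sub_mul_choose (R : Type*) [CommRing R] (k j : ℕ) :
    ((k : R) + 1 - j) * (Nat.choose (k + 1) j : R) = (k + 1) * (Nat.choose k j : R) := by
  rcases le_or_gt j (k + 1) with hj | hj
  · have h := congrArg (Nat.cast (R := R)) (Nat.choose_mul_succ_eq k j)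
    push_cast [Nat.cast_sub hj] at h
    linear_combination -h
  · simp [Nat.choose_eq_zero_of_lt hj, Nat.choose_eq_zero_of_lt (k.lt_succ_self.trans hj)]

lemma sum_range_succ_eq_sum_Icc_one {M : Type*} [AddCommMonoid M] {g : ℕ → M} (hg : g 0 = 0)
    (n : ℕ) : ∑ k ∈ range (n + 1), g k = ∑ k ∈ Icc 1 n, g k := by
  rw [range_eq_Ico, sum_eq_sum_Ico_succ_bot n.succ_pos, hg, zero_add]
  rfl

section GeneralizedFactorialCoefficients

/-- The generalized factorial coefficient `𝒞(n, k; σ)`, equal to `σ ^ k * S_σ(n, k)` for `n ≥ 1`.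
Unlike in `genStirling`, the sum includes `j = 0`, so that the recurrence in `n` also starts
correctly at `n = 0`. -/
noncomputable def genFactorialCoeff (σ : ℝ) (n k : ℕ) : ℝ :=
  (1 / (Nat.factorial k : ℝ)) *
    ∑ j ∈ range (k + 1), (-1 : ℝ) ^ j * (Nat.choose k j : ℝ) * risingFactorial (-(j * σ)) n

lemma risingFactorial_succ (x : ℝ) (n : ℕ) :
    risingFactorial x (n + 1) = risingFactorial x n * (x + n) :=
  prod_range_succ _ n

lemma risingFactorial_zero_left {n : ℕ} (hn : n ≠ 0) : risingFactorial 0 n = 0 :=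
  prod_eq_zero (mem_range.2 hn.bot_lt) (by simp)

variable (σ : ℝ)

lemma genFactorialCoeff_zero_zero : genFactorialCoeff σ 0 0 = 1 := by
  simp [genFactorialCoeff, risingFactorial]

lemma genFactorialCoeff_zero_succ (k : ℕ) : genFactorialCoeff σ 0 (k + 1) = 0 := by
  have alternating_sum : ∑ j ∈ range (k + 1 + 1), (-1 : ℝ) ^ j * (Nat.choose (k + 1) j : ℝ) = 0 :=
    mod_cast Int.alternating_sum_range_choose_of_ne k.succ_ne_zero
  simp only [genFactorialCoeff, risingFactorial, range_zero, prod_empty, mul_one, alternating_sum,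
    mul_zero]

lemma genFactorialCoeff_zero_right {n : ℕ} (hn : n ≠ 0) : genFactorialCoeff σ n 0 = 0 := by
  simp [genFactorialCoeff, risingFactorial_zero_left hn]

lemma genFactorialCoeff_succ_zero (n : ℕ) :
    genFactorialCoeff σ (n + 1) 0 = n * genFactorialCoeff σ n 0 := by
  simp [genFactorialCoeff, risingFactorial_succ, mul_comm]

lemma genFactorialCoeff_succ_succ (n k : ℕ) :
    genFactorialCoeff σ (n + 1) (k + 1) =
      σ * genFactorialCoeff σ n k + (n - (k + 1) * σ) * genFactorialCoeff σ n (k + 1) := by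
  set c : ℕ → ℕ → ℝ := fun m j ↦
    (-1 : ℝ) ^ j * (Nat.choose m j : ℝ) * risingFactorial (-(j * σ)) n with hc
  have sum_succ : ∑ j ∈ range (k + 1 + 1), (-1 : ℝ) ^ j * (Nat.choose (k + 1) j : ℝ) *
        risingFactorial (-(j * σ)) (n + 1) =
      σ * (k + 1) * ∑ j ∈ range (k + 1), c k j +
        (n - (k + 1) * σ) * ∑ j ∈ range (k + 1 + 1), c (k + 1) j := by
    have extend : ∑ j ∈ range (k + 1), c k j = ∑ j ∈ range (k + 1 + 1), c k j := by
      simp [sum_range_succ _ (k + 1), hc]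
    rw [extend, mul_sum, mul_sum, ← sum_add_distrib]
    refine sum_congr rfl fun j _ ↦ ?_
    simp only [hc, risingFactorial_succ]
    linear_combination σ * (-1) ^ j * risingFactorial (-(j * σ)) n *
      cast_succ_sub_mul_choose ℝ k j
  have coeff_eq (m : ℕ) : genFactorialCoeff σ n m = 1 / m.factorial * ∑ j ∈ range (m + 1), c m j :=
    rfl
  rw [coeff_eq, coeff_eq, genFactorialCoeff, sum_succ, Nat.factorial_succ, Nat.cast_mul,
    Nat.cast_succ]
  field_simp

lemma genFactorialCoeff_of_lt {n k : ℕ} (h : n < k) : genFactorialCoeff σ n k = 0 := by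
  induction n generalizing k with
  | zero =>
    obtain ⟨m, rfl⟩ := Nat.exists_eq_succ_of_ne_zero h.ne'
    exact genFactorialCoeff_zero_succ σ m
  | succ n ih =>
    obtain ⟨m, rfl⟩ := Nat.exists_eq_succ_of_ne_zero (Nat.ne_zero_of_lt h)
    rw [Nat.succ_eq_add_one, genFactorialCoeff_succ_succ, ih (by omega), ih (by omega)]
    ring

variable {σ} in
lemma genFactorialCoeff_nonneg (h0 : 0 ≤ σ) (h1 : σ ≤ 1) (n k : ℕ) :
    0 ≤ genFactorialCoeff σ n k := by
  induction n generalizing k with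
  | zero =>
    cases k with
    | zero => simp [genFactorialCoeff_zero_zero]
    | succ k => exact (genFactorialCoeff_zero_succ σ k).ge
  | succ n ih =>
    cases k with
    | zero =>
      rw [genFactorialCoeff_succ_zero]
      exact mul_nonneg n.cast_nonneg (ih 0)
    | succ k =>
      rw [genFactorialCoeff_succ_succ]
      refine add_nonneg (mul_nonneg h0 (ih k)) ?_
      rcases le_or_gt (k + 1) n with hk | hk
      · have hk' : (k : ℝ) + 1 ≤ n := mod_cast hk
        exact mul_nonneg (by nlinarith) (ih _)
      · simp [genFactorialCoeff_of_lt σ hk]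

lemma sum_genFactorialCoeff_succ_mul (n : ℕ) (x : ℕ → ℝ) :
    ∑ k ∈ range (n + 1 + 1), genFactorialCoeff σ (n + 1) k * x k =
      ∑ k ∈ range (n + 1), genFactorialCoeff σ n k * (σ * x (k + 1) + (n - k * σ) * x k) := by
  have extend : ∑ k ∈ range (n + 1), genFactorialCoeff σ n k * ((n - k * σ) * x k) =
      ∑ k ∈ range (n + 1 + 1), genFactorialCoeff σ n k * ((n - k * σ) * x k) := by
    simp [sum_range_succ _ (n + 1), genFactorialCoeff_of_lt σ n.lt_succ_self]
  simp only [mul_add, sum_add_distrib]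
  rw [extend, sum_range_succ' _ (n + 1), sum_range_succ' _ (n + 1), ← add_assoc,
    ← sum_add_distrib, genFactorialCoeff_succ_zero]
  congr 1
  · refine sum_congr rfl fun k _ ↦ ?_
    rw [genFactorialCoeff_succ_succ]
    push_cast
    ring
  · push_cast
    ring

variable {σ}

lemma genFactorialCoeff_eq_pow_mul_genStirling (hσ : σ ≠ 0) {n : ℕ} (hn : n ≠ 0) (k : ℕ) :
    genFactorialCoeff σ n k = σ ^ k * genStirling σ n k := by
  have hσk : σ ^ k ≠ 0 := pow_ne_zero k hσ
  rw [genFactorialCoeff, genStirling,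
    sum_range_succ_eq_sum_Icc_one (by simp [risingFactorial_zero_left hn]), ← mul_assoc]
  congr 1
  field_simp

lemma sum_range_genFactorialCoeff_mul (hσ : σ ≠ 0) {n : ℕ} (hn : n ≠ 0) (x : ℕ → ℝ) :
    ∑ k ∈ range (n + 1), genFactorialCoeff σ n k * x k =
      ∑ k ∈ Icc 1 n, σ ^ k * genStirling σ n k * x k := by
  simp only [← genFactorialCoeff_eq_pow_mul_genStirling hσ hn]
  exact sum_range_succ_eq_sum_Icc_one (by simp [genFactorialCoeff_zero_right σ hn]) n

end GeneralizedFactorialCoefficients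

section IteratedDerivative

lemma hasDerivAt_exp_neg_rpow_mul_sum (β : ℝ) (n : ℕ) {l : ℝ} (hl : 0 < l) :
    HasDerivAt
      (fun l ↦ Real.exp (-l ^ β) *
        ∑ k ∈ range (n + 1), genFactorialCoeff β n k * l ^ (k * β - n : ℝ))
      (-(Real.exp (-l ^ β) *
        ∑ k ∈ range (n + 1 + 1),
          genFactorialCoeff β (n + 1) k * l ^ (k * β - (n + 1 : ℕ) : ℝ))) l := by
  have deriv_rpow (p : ℝ) : HasDerivAt (fun l : ℝ ↦ l ^ p) (p * l ^ (p - 1)) l :=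
    Real.hasDerivAt_rpow_const (.inl hl.ne')
  refine ((deriv_rpow β).fun_neg.exp.mul
    (.fun_sum fun k _ ↦ (deriv_rpow _).const_mul (genFactorialCoeff β n k))).congr_deriv ?_
  rw [sum_genFactorialCoeff_succ_mul, mul_assoc, ← mul_add, ← mul_neg (Real.exp _), mul_sum,
    ← sum_add_distrib, ← sum_neg_distrib]
  congr 1
  refine sum_congr rfl fun k _ ↦ ?_
  have exponent_succ : l ^ (((k + 1 : ℕ) : ℝ) * β - (n + 1 : ℕ)) =
      l ^ (β - 1) * l ^ (k * β - n : ℝ) := by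
    rw [← Real.rpow_add hl]
    push_cast
    ring_nf
  have exponent_same : (k * β - (n + 1 : ℕ) : ℝ) = k * β - n - 1 := by
    push_cast
    ring
  rw [exponent_succ, exponent_same]
  ring

lemma iteratedDeriv_exp_neg_rpow (β : ℝ) (n : ℕ) {l : ℝ} (hl : 0 < l) :
    iteratedDeriv n (fun l ↦ Real.exp (-l ^ β)) l =
      (-1) ^ n * (Real.exp (-l ^ β) *
        ∑ k ∈ range (n + 1), genFactorialCoeff β n k * l ^ (k * β - n : ℝ)) := by
  induction n generalizing l with
  | zero => simp [genFactorialCoeff_zero_zero]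
  | succ n ih =>
    have eventually_ih : iteratedDeriv n (fun l ↦ Real.exp (-l ^ β)) =ᶠ[𝓝 l] fun l ↦
        (-1) ^ n * (Real.exp (-l ^ β) *
          ∑ k ∈ range (n + 1), genFactorialCoeff β n k * l ^ (k * β - n : ℝ)) := by
      filter_upwards [eventually_gt_nhds hl] with y hy using ih hy
    rw [iteratedDeriv_succ, eventually_ih.deriv_eq,
      ((hasDerivAt_exp_neg_rpow_mul_sum β n hl).const_mul _).deriv]
    ring

end IteratedDerivative

section LaplaceTransform

/-- The bilateral Laplace transform of a `ℝ≥0∞`-valued function. Functions supported on the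
positive half-line have their usual Laplace transform; no integrability is required, a divergent
transform being `∞`. -/
noncomputable def laplaceTransform (φ : ℝ → ℝ≥0∞) (l : ℝ) : ℝ≥0∞ :=
  ∫⁻ t, φ t * ENNReal.ofReal (Real.exp (-l * t))

variable {φ ψ : ℝ → ℝ≥0∞}

lemma laplaceTransform_sum {ι : Type*} (s : Finset ι) {φ : ι → ℝ → ℝ≥0∞}
    (hφ : ∀ i ∈ s, AEMeasurable (φ i)) (l : ℝ) :
    laplaceTransform (fun t ↦ ∑ i ∈ s, φ i t) l = ∑ i ∈ s, laplaceTransform (φ i) l := by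
  simp only [laplaceTransform, sum_mul]
  exact lintegral_finsetSum' s fun i hi ↦ (hφ i hi).mul (by fun_prop)

lemma laplaceTransform_const_mul (c : ℝ≥0∞) (hφ : AEMeasurable φ) (l : ℝ) :
    laplaceTransform (fun t ↦ c * φ t) l = c * laplaceTransform φ l := by
  simp only [laplaceTransform, mul_assoc]
  exact lintegral_const_mul'' c (by fun_prop)

lemma laplaceTransform_mul_exp (φ : ℝ → ℝ≥0∞) (c l : ℝ) :
    laplaceTransform (fun t ↦ φ t * ENNReal.ofReal (Real.exp (-c * t))) l =
      laplaceTransform φ (c + l) := by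
  refine lintegral_congr fun t ↦ ?_
  rw [mul_assoc, ← ENNReal.ofReal_mul (Real.exp_pos _).le, ← Real.exp_add]
  ring_nf

lemma laplaceTransform_lconvolution (hφ : AEMeasurable φ) (hψ : AEMeasurable ψ) (l : ℝ) :
    laplaceTransform (φ ⋆ₗ ψ) l = laplaceTransform φ l * laplaceTransform ψ l := by
  set e : ℝ → ℝ≥0∞ := fun t ↦ ENNReal.ofReal (Real.exp (-l * t)) with he
  have : Measurable e := by fun_prop
  have exp_split (t v : ℝ) : e t = e v * e (-v + t) := by
    rw [he, ← ENNReal.ofReal_mul (Real.exp_pos _).le, ← Real.exp_add]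
    ring_nf
  calc ∫⁻ t, (∫⁻ v, φ v * ψ (-v + t)) * e t
      = ∫⁻ t, ∫⁻ v, (φ v * e v) * (ψ (-v + t) * e (-v + t)) := by
        refine lintegral_congr fun t ↦ ?_
        rw [← lintegral_mul_const' (e t) _ ENNReal.ofReal_ne_top]
        refine lintegral_congr fun v ↦ ?_
        rw [exp_split t v]
        ring
    _ = ∫⁻ v, ∫⁻ t, (φ v * e v) * (ψ (-v + t) * e (-v + t)) :=
        lintegral_lintegral_swap (by unfold Function.uncurry; fun_prop)
    _ = ∫⁻ v, (φ v * e v) * ∫⁻ t, ψ t * e t := by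
        refine lintegral_congr fun v ↦ ?_
        rw [lintegral_add_left_eq_self (fun t ↦ φ v * e v * (ψ t * e t)),
          lintegral_const_mul'' _ (by fun_prop)]
    _ = (∫⁻ v, φ v * e v) * ∫⁻ t, ψ t * e t := lintegral_mul_const'' _ (by fun_prop)

end LaplaceTransform

section MomentGeneratingFunction

variable {φ ψ : ℝ → ℝ≥0∞}

lemma lintegral_exp_withDensity (hφ : AEMeasurable φ) (s : ℝ) :
    ∫⁻ t, ENNReal.ofReal (Real.exp (s * t)) ∂volume.withDensity φ = laplaceTransform φ (-s) := by
  rw [lintegral_withDensity_eq_lintegral_mul₀ hφ (by fun_prop), laplaceTransform]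
  simp only [Pi.mul_apply, neg_neg]

lemma mem_integrableExpSet_withDensity_iff (hφ : AEMeasurable φ) (s : ℝ) :
    s ∈ integrableExpSet id (volume.withDensity φ) ↔ laplaceTransform φ (-s) ≠ ∞ := by
  rw [← lintegral_exp_withDensity hφ]
  exact (lintegral_ofReal_ne_top_iff_integrable (by fun_prop)
    (.of_forall fun t ↦ (Real.exp_pos _).le)).symm

lemma mem_interior_integrableExpSet_withDensity (hφ : AEMeasurable φ) {l : ℝ}
    (hfin : ∀ᶠ r in 𝓝 l, laplaceTransform φ r ≠ ∞) :
    -l ∈ interior (integrableExpSet id (volume.withDensity φ)) := by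
  have tendsto_neg : Tendsto (fun s : ℝ ↦ -s) (𝓝 (-l)) (𝓝 l) :=
    continuous_neg.tendsto' _ _ (neg_neg l)
  rw [mem_interior_iff_mem_nhds]
  filter_upwards [tendsto_neg.eventually hfin] with s hs
  exact (mem_integrableExpSet_withDensity_iff hφ s).2 hs

lemma mgf_id_withDensity (hφ : AEMeasurable φ) :
    mgf id (volume.withDensity φ) = fun s ↦ (laplaceTransform φ (-s)).toReal := by
  ext s
  rw [← lintegral_exp_withDensity hφ, mgf, integral_eq_lintegral_of_nonneg_ae
    (.of_forall fun t ↦ (Real.exp_pos _).le) (by fun_prop)]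
  rfl

lemma laplaceTransform_pow_mul (hφ : AEMeasurable φ) (hsupp : ∀ t < 0, φ t = 0) (n : ℕ) {l : ℝ}
    (hfin : ∀ᶠ r in 𝓝 l, laplaceTransform φ r ≠ ∞) :
    laplaceTransform (fun t ↦ ENNReal.ofReal (t ^ n) * φ t) l =
      ENNReal.ofReal ((-1) ^ n * iteratedDeriv n (fun r ↦ (laplaceTransform φ r).toReal) l) := by
  have hl := mem_interior_integrableExpSet_withDensity hφ hfin
  have hint := integrable_pow_mul_exp_of_mem_interior_integrableExpSet hl n
  have hnonneg : ∀ᵐ t ∂volume.withDensity φ, 0 ≤ id t ^ n * Real.exp (-l * id t) := by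
    refine (ae_withDensity_iff' hφ).2 (.of_forall fun t ht ↦ ?_)
    have : 0 ≤ t := not_lt.1 (mt (hsupp t) ht)
    positivity
  have moment := iteratedDeriv_mgf hl n
  rw [mgf_id_withDensity hφ, iteratedDeriv_comp_neg n fun r ↦ (laplaceTransform φ r).toReal,
    neg_neg, smul_eq_mul] at moment
  rw [moment, ofReal_integral_eq_lintegral_ofReal hint hnonneg,
    lintegral_withDensity_eq_lintegral_mul₀ hφ (by fun_prop)]
  refine lintegral_congr fun t ↦ ?_
  rw [Pi.mul_apply, ENNReal.ofReal_mul' (Real.exp_pos _).le]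
  simp only [id]
  ring

lemma measure_eq_of_mgf_id_eventuallyEq {μ ν : Measure ℝ}
    (hμ : 0 ∈ interior (integrableExpSet id μ)) (hν : 0 ∈ interior (integrableExpSet id ν))
    (h : mgf id μ =ᶠ[𝓝 0] mgf id ν) : μ = ν := by
  have finite_of_mem {ρ : Measure ℝ} (hρ : 0 ∈ interior (integrableExpSet id ρ)) :
      IsFiniteMeasure ρ := by
    have : Integrable (fun _ : ℝ ↦ (1 : ℝ)) ρ := by
      simpa [integrableExpSet] using interior_subset hρ
    exact (integrable_const_iff_isFiniteMeasure one_ne_zero).1 this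
  have := finite_of_mem hμ
  have := finite_of_mem hν
  set S := interior (integrableExpSet id μ) ∩ interior (integrableExpSet id ν)
  have strip_convex : Convex ℝ {z : ℂ | z.re ∈ S} :=
    (convex_integrableExpSet.interior.inter convex_integrableExpSet.interior).linear_preimage
      Complex.reLm
  have tendsto_ofReal : Tendsto ((↑) : ℝ → ℂ) (𝓝[≠] 0) (𝓝[≠] ((0 : ℝ) : ℂ)) :=
    Complex.continuous_ofReal.continuousWithinAt.tendsto_nhdsWithin
      fun x hx ↦ by simpa using hx
  have eqOn_strip : Set.EqOn (complexMGF id μ) (complexMGF id ν) {z | z.re ∈ S} := by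
    refine AnalyticOnNhd.eqOn_of_preconnected_of_frequently_eq
      (fun z hz ↦ analyticAt_complexMGF hz.1) (fun z hz ↦ analyticAt_complexMGF hz.2)
      strip_convex.isPreconnected (z₀ := ((0 : ℝ) : ℂ)) ⟨hμ, hν⟩ (tendsto_ofReal.frequently ?_)
    refine Eventually.frequently ?_
    filter_upwards [nhdsWithin_le_nhds h] with x hx
    simp only [complexMGF_ofReal, hx]
  refine Measure.ext_of_charFun (funext fun t ↦ ?_)
  rw [← complexMGF_id_mul_I, ← complexMGF_id_mul_I]
  exact eqOn_strip (by simpa using ⟨hμ, hν⟩)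

lemma ae_eq_of_laplaceTransform_eventuallyEq (hφ : AEMeasurable φ) (hψ : AEMeasurable ψ) {l : ℝ}
    (hfin : ∀ᶠ r in 𝓝 l, laplaceTransform φ r ≠ ∞)
    (h : laplaceTransform φ =ᶠ[𝓝 l] laplaceTransform ψ) : φ =ᵐ[volume] ψ := by
  set e : ℝ → ℝ≥0∞ := fun t ↦ ENNReal.ofReal (Real.exp (-l * t)) with he
  have : Measurable e := by fun_prop
  have tendsto_shift : Tendsto (fun r ↦ l + r) (𝓝 0) (𝓝 l) :=
    (continuous_const_add l).tendsto' _ _ (add_zero l)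
  have tendsto_shift_neg : Tendsto (fun r ↦ l + -r) (𝓝 0) (𝓝 l) :=
    (continuous_const.add continuous_neg).tendsto' _ _ (by simp)
  have zero_mem_interior {θ : ℝ → ℝ≥0∞} (hθ : AEMeasurable θ)
      (hfin : ∀ᶠ r in 𝓝 l, laplaceTransform θ r ≠ ∞) :
      0 ∈ interior (integrableExpSet id (volume.withDensity fun t ↦ θ t * e t)) := by
    rw [← neg_zero]
    refine mem_interior_integrableExpSet_withDensity (by fun_prop) ?_
    simpa only [he, laplaceTransform_mul_exp] using tendsto_shift.eventually hfin
  have hfin' : ∀ᶠ r in 𝓝 l, laplaceTransform ψ r ≠ ∞ := by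
    filter_upwards [hfin, h] with r hr hr' using hr' ▸ hr
  have tilted_eq : volume.withDensity (fun t ↦ φ t * e t) =
      volume.withDensity fun t ↦ ψ t * e t := by
    refine measure_eq_of_mgf_id_eventuallyEq (zero_mem_interior hφ hfin)
      (zero_mem_interior hψ hfin') ?_
    rw [mgf_id_withDensity (by fun_prop), mgf_id_withDensity (by fun_prop)]
    filter_upwards [tendsto_shift_neg.eventually h] with s hs
    simp only [he, laplaceTransform_mul_exp, hs]
  filter_upwards [(withDensity_eq_iff_of_sigmaFinite (by fun_prop) (by fun_prop)).1 tilted_eq]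
    with t ht
  exact (ENNReal.mul_left_inj (by simp [Real.exp_pos]) ENNReal.ofReal_ne_top).1 ht

end MomentGeneratingFunction

section RiemannLiouvilleKernel

/-- The Riemann–Liouville kernel `t ^ (a - 1) / Γ(a)` on `[0, ∞)`, extended by zero. Convolution
with it is the fractional integral of order `a`, and its Laplace transform is `l ^ (-a)`. -/
noncomputable def riemannLiouvilleKernel (a t : ℝ) : ℝ≥0∞ :=
  ENNReal.ofReal (if 0 ≤ t then t ^ (a - 1) / Real.Gamma a else 0)

@[fun_prop]
lemma measurable_riemannLiouvilleKernel (a : ℝ) : Measurable (riemannLiouvilleKernel a) :=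
  (Measurable.ite measurableSet_Ici (by fun_prop) measurable_const).ennreal_ofReal

lemma laplaceTransform_riemannLiouvilleKernel {a l : ℝ} (ha : 0 < a) (hl : 0 < l) :
    laplaceTransform (riemannLiouvilleKernel a) l = ENNReal.ofReal (l ^ (-a)) := by
  have kernel_mul_exp (t : ℝ) : riemannLiouvilleKernel a t * ENNReal.ofReal (Real.exp (-l * t)) =
      ENNReal.ofReal (l ^ (-a)) * gammaPDF a l t := by
    have := (Real.rpow_pos_of_pos hl a).ne'
    rw [riemannLiouvilleKernel, gammaPDF_eq, ← ENNReal.ofReal_mul' (Real.exp_pos _).le,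
      ← ENNReal.ofReal_mul (Real.rpow_nonneg hl.le _), Real.rpow_neg hl.le]
    split_ifs
    · field_simp
    · simp
  simp only [laplaceTransform, kernel_mul_exp]
  rw [lintegral_const_mul' _ _ ENNReal.ofReal_ne_top, lintegral_gammaPDF_eq_one ha hl, mul_one]

lemma toReal_lconvolution_riemannLiouvilleKernel {f : ℝ → ℝ} (hf : AEMeasurable f)
    (hf_nonneg : ∀ t, 0 ≤ f t) (hf_zero : ∀ t ≤ 0, f t = 0) {a : ℝ} (ha : 0 < a) (t : ℝ) :
    (((fun v ↦ ENNReal.ofReal (f v)) ⋆ₗ riemannLiouvilleKernel a) t).toReal =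
      ∫ v in Set.Ioo 0 t, f v * (t - v) ^ (a - 1) / Real.Gamma a := by
  have := Real.Gamma_pos_of_pos ha
  have integrand_lt_top (v : ℝ) : ENNReal.ofReal (f v) * riemannLiouvilleKernel a (-v + t) < ∞ :=
    ENNReal.mul_lt_top ENNReal.ofReal_lt_top ENNReal.ofReal_lt_top
  rw [lconvolution_def, ← integral_toReal (by fun_prop) (.of_forall integrand_lt_top),
    ← integral_Ioc_eq_integral_Ioo, ← integral_indicator measurableSet_Ioc]
  refine integral_congr_ae (.of_forall fun v ↦ ?_)
  simp only [riemannLiouvilleKernel, neg_add_eq_sub, sub_nonneg, Set.indicator_apply, Set.mem_Ioc,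
    ENNReal.toReal_mul, ENNReal.toReal_ofReal (hf_nonneg v)]
  rcases le_or_gt v 0 with hv | hv
  · simp [hf_zero v hv]
  · by_cases hvt : v ≤ t
    · have : 0 ≤ t - v := sub_nonneg.2 hvt
      rw [if_pos hvt, if_pos ⟨hv, hvt⟩, ENNReal.toReal_ofReal (by positivity), mul_div_assoc]
    · simp [hvt]

end RiemannLiouvilleKernel

lemma cast_sub_mul_pos {β : ℝ} (hβ0 : 0 ≤ β) (hβ1 : β < 1) {n k : ℕ} (hn : n ≠ 0) (hk : k ≤ n) :
    0 < (n : ℝ) - k * β := by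
  have hn' : (0 : ℝ) < n := mod_cast hn.bot_lt
  have hk' : (k : ℝ) ≤ n := mod_cast hk
  nlinarith

namespace IsStableDensity

variable {β : ℝ} {f : ℝ → ℝ}

lemma integrableOn_exp_mul (hf : IsStableDensity β f) {l : ℝ} (hl : 0 ≤ l) :
    IntegrableOn (fun t ↦ Real.exp (-l * t) * f t) (Set.Ioi 0) :=
  .of_integral_ne_zero (by rw [hf.2.2 l hl]; exact (Real.exp_pos _).ne')

lemma aemeasurable (hf : IsStableDensity β f) : AEMeasurable f := by
  have hf_Ioi : AEMeasurable f (volume.restrict (Set.Ioi 0)) := by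
    simpa using (hf.integrableOn_exp_mul le_rfl).aemeasurable
  have hf_indicator : (Set.Ioi 0).indicator f = f :=
    Set.indicator_eq_self.2 fun t ht ↦ not_le.1 (mt (hf.2.1 t) ht)
  exact hf_indicator ▸ (aemeasurable_indicator_iff measurableSet_Ioi).2 hf_Ioi

lemma laplaceTransform_eq (hf : IsStableDensity β f) {l : ℝ} (hl : 0 ≤ l) :
    laplaceTransform (fun t ↦ ENNReal.ofReal (f t)) l = ENNReal.ofReal (Real.exp (-l ^ β)) := by
  rw [← hf.2.2 l hl, ofReal_integral_eq_lintegral_ofReal (hf.integrableOn_exp_mul hl)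
    (.of_forall fun t ↦ mul_nonneg (Real.exp_pos _).le (hf.1 t)),
    ← lintegral_indicator measurableSet_Ioi]
  refine lintegral_congr fun t ↦ ?_
  rw [← ENNReal.ofReal_mul (hf.1 t), mul_comm, Set.indicator_apply]
  split_ifs with ht
  · rfl
  · rw [hf.2.1 t (not_lt.1 ht), mul_zero, ENNReal.ofReal_zero]

lemma laplaceTransform_pow_mul (hf : IsStableDensity β f) (n : ℕ) {l : ℝ} (hl : 0 < l) :
    laplaceTransform (fun t ↦ ENNReal.ofReal (t ^ n) * ENNReal.ofReal (f t)) l =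
      ENNReal.ofReal (Real.exp (-l ^ β) *
        ∑ k ∈ range (n + 1), genFactorialCoeff β n k * l ^ (k * β - n : ℝ)) := by
  have transform_near : laplaceTransform (fun t ↦ ENNReal.ofReal (f t)) =ᶠ[𝓝 l]
      fun r ↦ ENNReal.ofReal (Real.exp (-r ^ β)) := by
    filter_upwards [eventually_gt_nhds hl] with r hr using hf.laplaceTransform_eq hr.le
  have toReal_transform_near : (fun r ↦ (laplaceTransform (fun t ↦ ENNReal.ofReal (f t)) r).toReal)
      =ᶠ[𝓝 l] fun r ↦ Real.exp (-r ^ β) := by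
    filter_upwards [transform_near] with r hr
    rw [hr, ENNReal.toReal_ofReal (Real.exp_pos _).le]
  rw [_root_.laplaceTransform_pow_mul hf.aemeasurable.ennreal_ofReal
      (fun t ht ↦ by rw [hf.2.1 t ht.le, ENNReal.ofReal_zero]) n
      (transform_near.mono fun r hr ↦ hr ▸ ENNReal.ofReal_ne_top),
    toReal_transform_near.iteratedDeriv_eq, iteratedDeriv_exp_neg_rpow β n hl, ← mul_assoc,
    ← mul_pow, neg_one_mul, neg_neg, one_pow, one_mul]

lemma laplaceTransform_sum_lconvolution (hf : IsStableDensity β f) {ι : Type*} (s : Finset ι)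
    {c a : ι → ℝ} (hc : ∀ i ∈ s, 0 ≤ c i) (ha : ∀ i ∈ s, 0 < a i) {l : ℝ} (hl : 0 < l) :
    laplaceTransform (fun t ↦ ∑ i ∈ s, ENNReal.ofReal (c i) *
        ((fun v ↦ ENNReal.ofReal (f v)) ⋆ₗ riemannLiouvilleKernel (a i)) t) l =
      ENNReal.ofReal (Real.exp (-l ^ β) * ∑ i ∈ s, c i * l ^ (-a i)) := by
  have hφ : AEMeasurable fun v ↦ ENNReal.ofReal (f v) := hf.aemeasurable.ennreal_ofReal
  rw [laplaceTransform_sum s fun i _ ↦ by fun_prop, mul_sum,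
    ENNReal.ofReal_sum_of_nonneg fun i hi ↦ by have := hc i hi; positivity]
  refine sum_congr rfl fun i hi ↦ ?_
  rw [laplaceTransform_const_mul _ (by fun_prop),
    laplaceTransform_lconvolution hφ (by fun_prop), hf.laplaceTransform_eq hl.le,
    laplaceTransform_riemannLiouvilleKernel (ha i hi) hl,
    ← ENNReal.ofReal_mul (Real.exp_pos _).le, ← ENNReal.ofReal_mul (hc i hi), mul_left_comm]

lemma ae_ofReal_pow_mul_eq_sum_lconvolution (hf : IsStableDensity β f) (hβ0 : 0 ≤ β) (hβ1 : β < 1)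
    {n : ℕ} (hn : n ≠ 0) :
    (fun t ↦ ENNReal.ofReal (t ^ n) * ENNReal.ofReal (f t)) =ᵐ[volume] fun t ↦
      ∑ k ∈ range (n + 1), ENNReal.ofReal (genFactorialCoeff β n k) *
        ((fun v ↦ ENNReal.ofReal (f v)) ⋆ₗ riemannLiouvilleKernel (n - k * β)) t := by
  have hφ : AEMeasurable fun v ↦ ENNReal.ofReal (f v) := hf.aemeasurable.ennreal_ofReal
  have pos_near_one : ∀ᶠ l : ℝ in 𝓝 1, 0 < l := eventually_gt_nhds one_pos
  refine ae_eq_of_laplaceTransform_eventuallyEq (l := 1) (by fun_prop) (by fun_prop) ?_ ?_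
  · filter_upwards [pos_near_one] with l hl
    rw [hf.laplaceTransform_pow_mul n hl]
    exact ENNReal.ofReal_ne_top
  · filter_upwards [pos_near_one] with l hl
    rw [hf.laplaceTransform_pow_mul n hl, hf.laplaceTransform_sum_lconvolution _
      (fun k _ ↦ genFactorialCoeff_nonneg hβ0 hβ1.le n k)
      (fun k hk ↦ cast_sub_mul_pos hβ0 hβ1 hn (mem_range_succ_iff.1 hk)) hl]
    simp only [neg_sub]

lemma ae_pow_mul_eq_sum_integral (hf : IsStableDensity β f) (hβ0 : 0 ≤ β) (hβ1 : β < 1) {n : ℕ}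
    (hn : n ≠ 0) :
    ∀ᵐ t, t ^ n * f t = ∑ k ∈ range (n + 1), genFactorialCoeff β n k *
      ∫ v in Set.Ioo 0 t, f v * (t - v) ^ ((n : ℝ) - k * β - 1) / Real.Gamma ((n : ℝ) - k * β) := by
  filter_upwards [hf.ae_ofReal_pow_mul_eq_sum_lconvolution hβ0 hβ1 hn] with t ht
  have sum_ne_top := ht ▸ ENNReal.mul_ne_top ENNReal.ofReal_ne_top ENNReal.ofReal_ne_top
  have toReal_pow_mul : (ENNReal.ofReal (t ^ n) * ENNReal.ofReal (f t)).toReal = t ^ n * f t := by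
    rcases le_or_gt t 0 with ht0 | ht0
    · simp [hf.2.1 t ht0]
    · rw [ENNReal.toReal_mul, ENNReal.toReal_ofReal (by positivity), ENNReal.toReal_ofReal (hf.1 t)]
  rw [← toReal_pow_mul, ht, ENNReal.toReal_sum (ENNReal.sum_ne_top.1 sum_ne_top)]
  refine sum_congr rfl fun k hk ↦ ?_
  rw [ENNReal.toReal_mul, ENNReal.toReal_ofReal (genFactorialCoeff_nonneg hβ0 hβ1.le n k),
    toReal_lconvolution_riemannLiouvilleKernel hf.aemeasurable hf.1 hf.2.1
      (cast_sub_mul_pos hβ0 hβ1 hn (mem_range_succ_iff.1 hk))]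

end IsStableDensity

/-- Gibbs decomposition of the stable density:
`∑_{k=1}^n β^k t^{-n} S_β(n,k) ∫_0^t f_β(v)(t-v)^{n-kβ-1}/Γ(n-kβ) dv = f_β(t)`
for almost every `t > 0`. -/
theorem gibbs_decomposition_stable_density (β : ℝ) (hβ0 : 0 < β) (hβ1 : β < 1)
    (n : ℕ) (hn : 1 ≤ n) (f : ℝ → ℝ) (hf : IsStableDensity β f) :
    ∀ᵐ t ∂(volume.restrict (Set.Ioi (0 : ℝ))),
      ∑ k ∈ Finset.Icc 1 n,
          β ^ k * t ^ (-(n : ℝ)) * genStirling β n k *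
            ∫ v in Set.Ioo (0 : ℝ) t,
              f v * (t - v) ^ ((n : ℝ) - k * β - 1) / Real.Gamma ((n : ℝ) - k * β)
        = f t := by
  have hn0 : n ≠ 0 := Nat.one_le_iff_ne_zero.1 hn
  filter_upwards [ae_restrict_of_ae (hf.ae_pow_mul_eq_sum_integral hβ0.le hβ1 hn0),
    ae_restrict_mem measurableSet_Ioi] with t decomposition ht
  have ht0 : 0 < t := ht
  have f_eq : f t = t ^ (-(n : ℝ)) * (t ^ n * f t) := by
    rw [Real.rpow_neg ht0.le, Real.rpow_natCast, inv_mul_cancel_left₀ (pow_pos ht0 n).ne']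
  rw [f_eq, decomposition, sum_range_genFactorialCoeff_mul hβ0.ne' hn0, mul_sum]
  exact sum_congr rfl fun k _ ↦ by ring
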